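/- Define f(θ; x, v_1^M) = (1/M) Σ_{j=1}^M [ v_j^⊤ ∇_x s_m(x;θ) v_j + ½ (v_j^⊤ s_m(x;θ))² ]. Suppose that for θ₁, θ₂ near θ* and all i, j, ‖∇²_θ ∂_i∂_j l_m(x;θ₁) − ∇²_θ ∂_i∂_j l_m(x;θ₂)‖_F ≤ M_{ij}(x) ‖θ₁ − θ₂‖₂ and ‖∇²_θ (∂_i l_m ∂_j l_m)(x;θ₁) − ∇²_θ (∂_i l_m ∂_j l_m)(x;θ₂)‖_F ≤ N_{ij}(x) ‖θ₁ − θ₂‖₂, with E_{p_d}[M_{ij}²(x)] < ∞ and E_{p_d}[N_{ij}²(x)] < ∞, and that the i.i.d. projection vectors v_1,…,v_M satisfy E[‖v‖²] < ∞ and E[‖v v^⊤‖_F²] < ∞. Then there exists L(x, v_1^M) ≥ 0 such that for all θ₁, θ₂ near θ*, ‖∇²_θ f(θ₁; x, v_1^M) − ∇²_θ f(θ₂; x, v_1^M)‖_F ≤ L(x, v_1^M) ‖θ₁ − θ₂‖₂, and E_{p_d, p_v}[L²(x, v_1^M)] < ∞. (Lemma B.5 of the paper.) -/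

import Mathlib

open MeasureTheory

noncomputable section

/-- `∂ᵢ log p_m(x;θ)`, the `i`-th partial derivative in `x` of the log-density. -/
def dLx {D K : ℕ} (pm : EuclideanSpace ℝ (Fin K) → (Fin D → ℝ) → ℝ)
    (θ : EuclideanSpace ℝ (Fin K)) (x : Fin D → ℝ) (i : Fin D) : ℝ :=
  fderiv ℝ (fun y => Real.log (pm θ y)) x (Pi.single i 1)

/-- `∂ᵢ∂ⱼ log p_m(x;θ)`, a second partial derivative in `x` of the log-density. -/
def d2Lx {D K : ℕ} (pm : EuclideanSpace ℝ (Fin K) → (Fin D → ℝ) → ℝ)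
    (θ : EuclideanSpace ℝ (Fin K)) (x : Fin D → ℝ) (i j : Fin D) : ℝ :=
  fderiv ℝ (fun y => dLx pm θ y j) x (Pi.single i 1)

/-- `f(θ; x, v_1^M) = (1/M) Σⱼ [vⱼᵀ ∇ₓ s_m(x;θ) vⱼ + ½ (vⱼᵀ s_m(x;θ))²]`. -/
def avgF {D K M : ℕ} (pm : EuclideanSpace ℝ (Fin K) → (Fin D → ℝ) → ℝ)
    (θ : EuclideanSpace ℝ (Fin K)) (x : Fin D → ℝ) (vs : Fin M → Fin D → ℝ) : ℝ :=
  (1 / (M : ℝ)) * ∑ k : Fin M,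
    ((∑ i, ∑ j, vs k i * vs k j * d2Lx pm θ x i j)
      + (1/2) * (∑ i, vs k i * dLx pm θ x i) ^ 2)

/-- The `(a,b)` entry of the Hessian in `θ` of a scalar function on the parameter space. -/
def thetaHess2 {K : ℕ} (h : EuclideanSpace ℝ (Fin K) → ℝ) (θ : EuclideanSpace ℝ (Fin K))
    (a b : Fin K) : ℝ :=
  fderiv ℝ (fun θ₁ => fderiv ℝ h θ₁ (EuclideanSpace.single b 1)) θ (EuclideanSpace.single a 1)

lemma thetaHess2_sum {K : ℕ} {ι : Type} [Fintype ι] (c : ι → ℝ)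
    (H : ι → EuclideanSpace ℝ (Fin K) → ℝ) (hH : ∀ p, ContDiff ℝ (⊤ : ℕ∞) (H p))
    (θ : EuclideanSpace ℝ (Fin K)) (a b : Fin K) :
    thetaHess2 (fun θ => ∑ p, c p * H p θ) θ a b = ∑ p, c p * thetaHess2 (H p) θ a b := by
  unfold thetaHess2
  have h1 : ∀ p, Differentiable ℝ (H p) := fun p => (hH p).differentiable (by simp)
  have h2 : ∀ p, Differentiable ℝ
      (fun θ₁ => fderiv ℝ (H p) θ₁ (EuclideanSpace.single b 1)) := fun p => by
    have : ContDiff ℝ (⊤ : ℕ∞) (fderiv ℝ (H p)) := (hH p).fderiv_right (by simp)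
    exact (this.clm_apply contDiff_const).differentiable (by simp)
  have e : (fun θ₁ => fderiv ℝ (fun θ => ∑ p, c p * H p θ) θ₁ (EuclideanSpace.single b (1:ℝ)))
      = fun θ₁ => ∑ p, c p * fderiv ℝ (H p) θ₁ (EuclideanSpace.single b 1) := by
    funext θ₁
    rw [fderiv_fun_sum (fun p _ => ((h1 p) θ₁).const_mul (c p))]
    simp [fderiv_const_mul ((h1 _) θ₁)]
  rw [e, fderiv_fun_sum (fun p _ => ((h2 p) θ).const_mul (c p))]
  simp [fderiv_const_mul ((h2 _) θ)]

lemma frob_sum_le {K : ℕ} {ι : Type} [Fintype ι] (c : ι → ℝ) (A : ι → Fin K → Fin K → ℝ) :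
    Real.sqrt (∑ a, ∑ b, (∑ p, c p * A p a b) ^ 2)
      ≤ ∑ p, |c p| * Real.sqrt (∑ a, ∑ b, (A p a b) ^ 2) := by
  have key : ∀ F : Fin K → Fin K → ℝ, Real.sqrt (∑ a, ∑ b, (F a b) ^ 2)
      = ‖(WithLp.toLp 2 (fun q : Fin K × Fin K => F q.1 q.2) :
          EuclideanSpace ℝ (Fin K × Fin K))‖ := by
    intro F
    rw [EuclideanSpace.norm_eq, Fintype.sum_prod_type]
    simp
  simp only [key]
  have : (WithLp.toLp 2 (fun q : Fin K × Fin K => ∑ p, c p * A p q.1 q.2) :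
      EuclideanSpace ℝ (Fin K × Fin K))
      = ∑ p, c p • (WithLp.toLp 2 (fun q : Fin K × Fin K => A p q.1 q.2) :
          EuclideanSpace ℝ (Fin K × Fin K)) := by
    ext q
    simp
  rw [this]
  refine (norm_sum_le _ _).trans (le_of_eq ?_)
  simp [norm_smul]

lemma avgF_eq {D K M : ℕ} (pm : EuclideanSpace ℝ (Fin K) → (Fin D → ℝ) → ℝ)
    (θ : EuclideanSpace ℝ (Fin K)) (x : Fin D → ℝ) (vs : Fin M → Fin D → ℝ) :
    avgF pm θ x vs = ∑ p : (Fin M × Fin D × Fin D) ⊕ (Fin M × Fin D × Fin D),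
      (Sum.elim (fun q => (1 / (M : ℝ)) * (vs q.1 q.2.1 * vs q.1 q.2.2))
        (fun q => (1 / (M : ℝ)) * (1/2) * (vs q.1 q.2.1 * vs q.1 q.2.2)) p) *
      (Sum.elim (fun q θ => d2Lx pm θ x q.2.1 q.2.2)
        (fun q θ => dLx pm θ x q.2.1 * dLx pm θ x q.2.2) p : EuclideanSpace ℝ (Fin K) → ℝ) θ := by
  unfold avgF
  simp only [Fintype.sum_sum_type, Fintype.sum_prod_type, Sum.elim_inl, Sum.elim_inr,
    Finset.mul_sum, mul_add, Finset.sum_add_distrib, sq, Finset.sum_mul]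
  congr 1
  · refine Finset.sum_congr rfl fun k _ => Finset.sum_congr rfl fun i _ =>
      Finset.sum_congr rfl fun j _ => by ring
  · refine Finset.sum_congr rfl fun k _ => ?_
    rw [Finset.sum_comm]
    refine Finset.sum_congr rfl fun i _ =>
      Finset.sum_congr rfl fun j _ => by ring

lemma contDiff_dLx {D K : ℕ} (pm : EuclideanSpace ℝ (Fin K) → (Fin D → ℝ) → ℝ)
    (hsmooth : ContDiff ℝ (⊤ : ℕ∞)
      (fun p : EuclideanSpace ℝ (Fin K) × (Fin D → ℝ) => Real.log (pm p.1 p.2))) (i : Fin D) :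
    ContDiff ℝ (⊤ : ℕ∞)
      (fun p : EuclideanSpace ℝ (Fin K) × (Fin D → ℝ) => dLx pm p.1 p.2 i) := by
  unfold dLx
  refine ContDiff.clm_apply (ContDiff.fderiv (m := (⊤ : ℕ∞)) (n := (⊤ : ℕ∞))
    (f := fun (p : EuclideanSpace ℝ (Fin K) × (Fin D → ℝ)) y => Real.log (pm p.1 y))
    (g := fun p => p.2) ?_ contDiff_snd (by simp)) contDiff_const
  exact hsmooth.comp (contDiff_fst.fst.prodMk contDiff_snd)

lemma contDiff_d2Lx {D K : ℕ} (pm : EuclideanSpace ℝ (Fin K) → (Fin D → ℝ) → ℝ)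
    (hsmooth : ContDiff ℝ (⊤ : ℕ∞)
      (fun p : EuclideanSpace ℝ (Fin K) × (Fin D → ℝ) => Real.log (pm p.1 p.2))) (i j : Fin D) :
    ContDiff ℝ (⊤ : ℕ∞)
      (fun p : EuclideanSpace ℝ (Fin K) × (Fin D → ℝ) => d2Lx pm p.1 p.2 i j) := by
  unfold d2Lx
  refine ContDiff.clm_apply (ContDiff.fderiv (m := (⊤ : ℕ∞)) (n := (⊤ : ℕ∞))
    (f := fun (p : EuclideanSpace ℝ (Fin K) × (Fin D → ℝ)) y => dLx pm p.1 y j)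
    (g := fun p => p.2) ?_ contDiff_snd (by simp)) contDiff_const
  exact (contDiff_dLx pm hsmooth j).comp (contDiff_fst.fst.prodMk contDiff_snd)

lemma lintegral_fin {X V ι : Type} [Fintype ι] [MeasurableSpace X] [MeasurableSpace V]
    (μ : Measure X) (ν : Measure V) (pd : X → ℝ) (hpd : ∀ x, 0 < pd x)
    (c : ι → V → ℝ) (B : ι → X → ℝ)
    (hB : ∀ p, Integrable (fun x => pd x * B p x ^ 2) μ)
    (hc : ∀ p, Integrable (fun v => c p v ^ 2) ν) :
    (∫⁻ v, ∫⁻ x, ENNReal.ofReal (pd x * (∑ p, |c p v| * B p x) ^ 2) ∂μ ∂ν) < ⊤ := by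
  have hle : ∀ v x, pd x * (∑ p, |c p v| * B p x) ^ 2
      ≤ ∑ p, (Fintype.card ι * c p v ^ 2) * (pd x * B p x ^ 2) := by
    intro v x
    have := sq_sum_le_card_mul_sum_sq (s := Finset.univ) (f := fun p => |c p v| * B p x)
    refine (mul_le_mul_of_nonneg_left this (hpd x).le).trans (le_of_eq ?_)
    rw [Finset.mul_sum, Finset.mul_sum]
    refine Finset.sum_congr rfl fun p _ => ?_
    rw [mul_pow, sq_abs, Finset.card_univ]; ring
  have hint : ∀ v, Integrable
      (fun x => ∑ p, (Fintype.card ι * c p v ^ 2) * (pd x * B p x ^ 2)) μ := fun v =>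
    integrable_finsetSum _ fun p _ => (hB p).const_mul _
  have h1 : ∀ v, (∫⁻ x, ENNReal.ofReal (pd x * (∑ p, |c p v| * B p x) ^ 2) ∂μ)
      ≤ ENNReal.ofReal (∑ p, (Fintype.card ι * c p v ^ 2) * ∫ x, pd x * B p x ^ 2 ∂μ) := by
    intro v
    refine (lintegral_mono fun x => ENNReal.ofReal_le_ofReal (hle v x)).trans (le_of_eq ?_)
    rw [← ofReal_integral_eq_lintegral_ofReal (hint v), integral_finsetSum _ fun p _ => (hB p).const_mul _]
    · simp only [integral_const_mul]
    · refine Filter.Eventually.of_forall fun x => Finset.sum_nonneg fun p _ => ?_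
      have := (hpd x).le
      positivity
  refine (lintegral_mono h1).trans_lt ?_
  exact Integrable.lintegral_lt_top (integrable_finsetSum _ fun p _ =>
    (((hc p).const_mul _).mul_const _))

/-- **Lemma B.5 of the paper.** If the second `θ`-derivatives `∇²_θ ∂ᵢ∂ⱼ l_m` and
`∇²_θ(∂ᵢ l_m ∂ⱼ l_m)` are Lipschitz near `θ*` (in Frobenius norm) with square-integrable
constants `M_{ij}, N_{ij}`, and the i.i.d. projection vectors have `E[‖v‖²] < ∞` and
`E[‖v vᵀ‖_F²] < ∞`, then `∇²_θ f(θ; x, v_1^M)` is Lipschitz near `θ*` with a constant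
`L(x, v_1^M) ≥ 0` satisfying `E_{p_d, p_v}[L²(x, v_1^M)] < ∞`. -/
theorem ssm_theta_hessian_lipschitz
    (D K M : ℕ) (hD : 1 ≤ D) (hM : 1 ≤ M)
    (pd : (Fin D → ℝ) → ℝ)
    (pm : EuclideanSpace ℝ (Fin K) → (Fin D → ℝ) → ℝ)
    (θstar : EuclideanSpace ℝ (Fin K))
    (μv : Measure (Fin D → ℝ)) [IsProbabilityMeasure μv]
    -- data density: positive, differentiable, integrates to one
    (hpd_pos : ∀ x, 0 < pd x) (hpd_diff : Differentiable ℝ pd)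
    (hpd_prob : ∫ x, pd x = 1)
    -- model densities: positive and sufficiently smooth
    (hpm_pos : ∀ θ x, 0 < pm θ x)
    (hsmooth : ContDiff ℝ (⊤ : ℕ∞)
      (fun p : EuclideanSpace ℝ (Fin K) × (Fin D → ℝ) => Real.log (pm p.1 p.2)))
    -- Lipschitz assumptions near θ* with square-integrable constants
    (r : ℝ) (hr : 0 < r)
    (Mc Nc : Fin D → Fin D → (Fin D → ℝ) → ℝ)
    (hMc : ∀ (i j : Fin D), ∀ θ₁ ∈ Metric.ball θstar r, ∀ θ₂ ∈ Metric.ball θstar r, ∀ x,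
      Real.sqrt (∑ a, ∑ b, (thetaHess2 (fun θ => d2Lx pm θ x i j) θ₁ a b
          - thetaHess2 (fun θ => d2Lx pm θ x i j) θ₂ a b) ^ 2)
        ≤ Mc i j x * ‖θ₁ - θ₂‖)
    (hNc : ∀ (i j : Fin D), ∀ θ₁ ∈ Metric.ball θstar r, ∀ θ₂ ∈ Metric.ball θstar r, ∀ x,
      Real.sqrt (∑ a, ∑ b, (thetaHess2 (fun θ => dLx pm θ x i * dLx pm θ x j) θ₁ a b
          - thetaHess2 (fun θ => dLx pm θ x i * dLx pm θ x j) θ₂ a b) ^ 2)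
        ≤ Nc i j x * ‖θ₁ - θ₂‖)
    (hMcint : ∀ i j, Integrable (fun x => pd x * Mc i j x ^ 2))
    (hNcint : ∀ i j, Integrable (fun x => pd x * Nc i j x ^ 2))
    -- moments of the projection distribution
    (hv2 : Integrable (fun v => ∑ i, (v i) ^ 2) μv)
    (hv4 : Integrable (fun v => ∑ i, ∑ j, (v i * v j) ^ 2) μv) :
    -- conclusion: ∇²_θ f is Lipschitz near θ* with square-integrable constant
    ∃ L : (Fin D → ℝ) → (Fin M → Fin D → ℝ) → ℝ,
      (∀ x vs, 0 ≤ L x vs) ∧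
      (∀ θ₁ ∈ Metric.ball θstar r, ∀ θ₂ ∈ Metric.ball θstar r, ∀ x vs,
        Real.sqrt (∑ a, ∑ b, (thetaHess2 (fun θ => avgF pm θ x vs) θ₁ a b
            - thetaHess2 (fun θ => avgF pm θ x vs) θ₂ a b) ^ 2)
          ≤ L x vs * ‖θ₁ - θ₂‖) ∧
      (∫⁻ vs, ∫⁻ x, ENNReal.ofReal (pd x * L x vs ^ 2) ∂volume
          ∂(Measure.pi fun _ : Fin M => μv)) < ⊤ := by
  classical
  let ι := (Fin M × Fin D × Fin D) ⊕ (Fin M × Fin D × Fin D)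
  let c : ι → (Fin M → Fin D → ℝ) → ℝ := fun p vs =>
    Sum.elim (fun q => (1 / (M : ℝ)) * (vs q.1 q.2.1 * vs q.1 q.2.2))
        (fun q => (1 / (M : ℝ)) * (1/2) * (vs q.1 q.2.1 * vs q.1 q.2.2)) p
  let H : (Fin D → ℝ) → ι → EuclideanSpace ℝ (Fin K) → ℝ := fun x p =>
    Sum.elim (fun q θ => d2Lx pm θ x q.2.1 q.2.2)
        (fun q θ => dLx pm θ x q.2.1 * dLx pm θ x q.2.2) p
  let B : ι → (Fin D → ℝ) → ℝ := fun p x =>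
    Sum.elim (fun q => |Mc q.2.1 q.2.2 x|) (fun q => |Nc q.2.1 q.2.2 x|) p
  have hF : ∀ x vs, (fun θ => avgF pm θ x vs) = fun θ => ∑ p, c p vs * H x p θ := by
    intro x vs
    funext θ
    exact avgF_eq pm θ x vs
  have hH : ∀ x p, ContDiff ℝ (⊤ : ℕ∞) (H x p) := by
    intro x p
    have hp : ContDiff ℝ (⊤ : ℕ∞) (fun θ : EuclideanSpace ℝ (Fin K) => (θ, x)) :=
      contDiff_id.prodMk contDiff_const
    rcases p with q | q
    · exact (contDiff_d2Lx pm hsmooth q.2.1 q.2.2).comp hp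
    · exact ((contDiff_dLx pm hsmooth q.2.1).comp hp).mul
        ((contDiff_dLx pm hsmooth q.2.2).comp hp)
  have hB0 : ∀ p x, 0 ≤ B p x := by
    rintro (q | q) x
    · exact abs_nonneg _
    · exact abs_nonneg _
  have hLip : ∀ θ₁ ∈ Metric.ball θstar r, ∀ θ₂ ∈ Metric.ball θstar r, ∀ x p,
      Real.sqrt (∑ a, ∑ b, (thetaHess2 (H x p) θ₁ a b - thetaHess2 (H x p) θ₂ a b) ^ 2)
        ≤ B p x * ‖θ₁ - θ₂‖ := by
    intro θ₁ h₁ θ₂ h₂ x p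
    rcases p with q | q
    · exact (hMc q.2.1 q.2.2 θ₁ h₁ θ₂ h₂ x).trans
        (mul_le_mul_of_nonneg_right (le_abs_self _) (norm_nonneg _))
    · exact (hNc q.2.1 q.2.2 θ₁ h₁ θ₂ h₂ x).trans
        (mul_le_mul_of_nonneg_right (le_abs_self _) (norm_nonneg _))
  have hvv : ∀ i j, Integrable (fun v : Fin D → ℝ => (v i * v j) ^ 2) μv := by
    intro i j
    refine hv4.mono' (by fun_prop) (Filter.Eventually.of_forall fun v => ?_)
    rw [Real.norm_of_nonneg (sq_nonneg _)]
    refine le_trans ?_ (Finset.single_le_sum (f := fun i => ∑ j, (v i * v j) ^ 2)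
      (fun i _ => Finset.sum_nonneg fun j _ => sq_nonneg _) (Finset.mem_univ i))
    exact Finset.single_le_sum (f := fun j => (v i * v j) ^ 2)
      (fun j _ => sq_nonneg _) (Finset.mem_univ j)
  have hvk : ∀ (k : Fin M) i j, Integrable
      (fun vs : Fin M → Fin D → ℝ => (vs k i * vs k j) ^ 2) (Measure.pi fun _ => μv) := by
    intro k i j
    exact (measurePreserving_eval (fun _ : Fin M => μv) k).integrable_comp_of_integrable (hvv i j)
  refine ⟨fun x vs => ∑ p, |c p vs| * B p x, fun x vs => Finset.sum_nonneg fun p _ =>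
    mul_nonneg (abs_nonneg _) (hB0 p x), ?_, ?_⟩
  · intro θ₁ h₁ θ₂ h₂ x vs
    simp only [hF, thetaHess2_sum _ _ (hH x), ← Finset.sum_sub_distrib, ← mul_sub]
    refine (frob_sum_le _ _).trans ?_
    rw [Finset.sum_mul]
    refine Finset.sum_le_sum fun p _ => ?_
    rw [mul_assoc]
    exact mul_le_mul_of_nonneg_left (hLip θ₁ h₁ θ₂ h₂ x p) (abs_nonneg _)
  · refine lintegral_fin volume _ pd hpd_pos c B ?_ ?_
    · rintro (q | q)
      · simpa [B] using hMcint q.2.1 q.2.2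
      · simpa [B] using hNcint q.2.1 q.2.2
    · rintro (q | q)
      · simp only [c, Sum.elim_inl]
        simp_rw [mul_pow (1 / (M:ℝ))]
        exact (hvk q.1 q.2.1 q.2.2).const_mul _
      · simp only [c, Sum.elim_inr]
        simp_rw [mul_pow (1 / (M:ℝ) * (1/2))]
        exact (hvk q.1 q.2.1 q.2.2).const_mul _
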